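/- Let H, H' ⊆ V be subspaces with dim H = dim H' = k and dim(H ∩ H^⊥) = dim(H' ∩ H'^⊥) = k − r. Assume that either (a) the form ⟨−,−⟩ is skew-symmetric, or (b) the form ⟨−,−⟩ is symmetric and r > 0 or n − 2k + r > 0. Then there exists an isometry g of V with det g = 1 such that g(H) = H'. -/

import Mathlib

/-!
Let `B` be a nondegenerate form that is alternating, or symmetric over an algebraically closed
field. Such forms are classified by their dimension. A subspace `H` with radical `R` embeds in
`H × Dual K R` with its hyperbolic extension of `B`, which is nondegenerate and isometrically
embeds in `V`. The classification applied to orthogonal complements therefore extends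
isometries between subspaces (Witt), and the orbit of `H` is determined by `dim H` and `dim R`.

In a symplectic basis an isometry of an alternating form is a symplectic matrix, so it has
determinant `1`. In the symmetric case the determinant is `±1`, and the sign can be corrected by
the reflection in an anisotropic vector of `H` or of `H^⊥`, which preserves `H`. Such a vector
exists unless `H` and `H^⊥` are both isotropic, that is, unless `H^⊥ = H`; the numerical condition
excludes exactly this case.
-/

open Module

/-- Left orthogonal complement `H^⊥ = {v | ⟨v,w⟩ = 0 for all w ∈ H}` of a subspace with
respect to a bilinear form. -/
def bperp {V : Type*} [AddCommGroup V] [Module ℂ V]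
    (B : V →ₗ[ℂ] V →ₗ[ℂ] ℂ) (H : Submodule ℂ V) : Submodule ℂ V where
  carrier := {v | ∀ w ∈ H, B v w = 0}
  add_mem' := by
    intro a b ha hb w hw
    rw [map_add, LinearMap.add_apply, ha w hw, hb w hw, add_zero]
  zero_mem' := by
    intro w hw
    simp
  smul_mem' := by
    intro c a ha w hw
    rw [map_smul, LinearMap.smul_apply, ha w hw, smul_zero]

open LinearMap (BilinForm)
open scoped LinearMap.BilinForm.Isometry

section HyperbolicExtension

variable {K M R V : Type*} [Field K] [AddCommGroup M] [Module K M] [AddCommGroup R] [Module K R]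
  [AddCommGroup V] [Module K V]

/-- `B` is `ε`-symmetric: symmetric for `ε = 1` and skew-symmetric for `ε = -1`. -/
def IsEpsSymm (ε : K) (B : BilinForm K V) : Prop :=
  ∀ x y, B x y = ε * B y x

lemma IsEpsSymm.isRefl {ε : K} {B : BilinForm K V} (hB : IsEpsSymm ε B) : B.IsRefl :=
  fun x y hxy ↦ by rw [hB, hxy, mul_zero]

lemma IsEpsSymm.restrict {ε : K} {B : BilinForm K V} (hB : IsEpsSymm ε B) (W : Submodule K V) :
    IsEpsSymm ε (B.restrict W) :=
  fun x y ↦ hB x y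

lemma isEpsSymm_one_iff {B : BilinForm K V} : IsEpsSymm 1 B ↔ B.IsSymm := by
  simp only [IsEpsSymm, one_mul, LinearMap.BilinForm.isSymm_def]

lemma isEpsSymm_neg_one_iff [NeZero (2 : K)] {B : BilinForm K V} :
    IsEpsSymm (-1) B ↔ B.IsAlt := by
  refine ⟨fun hB x ↦ ?_, fun hB x y ↦ by rw [neg_one_mul, hB.neg_eq]⟩
  have h : (2 : K) * B x x = 0 := by linear_combination hB x x
  exact (mul_eq_zero.mp h).resolve_left two_ne_zero

/-- The bilinear form on `M × Dual K R` extending `C` on `M`, in which `Dual K R` is isotropic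
and is paired with `M` through `π`. When `π` restricts to an isomorphism from the radical of `C`
to `R`, this is the smallest nondegenerate `ε`-symmetric space containing `(M, C)`. -/
def hyperbolicExtension (ε : K) (C : BilinForm K M) (π : M →ₗ[K] R) :
    BilinForm K (M × Dual K R) :=
  LinearMap.mk₂ K (fun x y ↦ C x.1 y.1 + y.2 (π x.1) + ε * x.2 (π y.1))
    (fun _ _ _ ↦ by simp only [Prod.fst_add, Prod.snd_add, map_add, LinearMap.add_apply]; ring)
    (fun _ _ _ ↦ by
      simp only [Prod.smul_fst, Prod.smul_snd, map_smul, LinearMap.smul_apply, smul_eq_mul]; ring)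
    (fun _ _ _ ↦ by simp only [Prod.fst_add, Prod.snd_add, map_add, LinearMap.add_apply]; ring)
    (fun _ _ _ ↦ by
      simp only [Prod.smul_fst, Prod.smul_snd, map_smul, LinearMap.smul_apply, smul_eq_mul]; ring)

variable {ε : K} {C : BilinForm K M} {π : M →ₗ[K] R} {σ : R →ₗ[K] M}

@[simp]
lemma hyperbolicExtension_apply (x y : M × Dual K R) :
    hyperbolicExtension ε C π x y = C x.1 y.1 + y.2 (π x.1) + ε * x.2 (π y.1) :=
  rfl

lemma hyperbolicExtension_nondegenerate [FiniteDimensional K M] [FiniteDimensional K R]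
    (hε : ε ≠ 0) (hC : C.IsRefl) (hπσ : π ∘ₗ σ = LinearMap.id)
    (hσ : LinearMap.range σ = LinearMap.ker C) :
    (hyperbolicExtension ε C π).Nondegenerate := by
  refine .ofSeparatingLeft fun ⟨x, φ⟩ h ↦ ?_
  have hπσ' (r : R) : π (σ r) = r := LinearMap.congr_fun hπσ r
  have hσC (r : R) : C (σ r) = 0 := hσ.le ⟨r, rfl⟩
  have hπx : π x = 0 :=
    (forall_dual_apply_eq_zero_iff K _).mp fun ψ ↦ by simpa using h (0, ψ)
  have hφ : φ = 0 := by
    ext r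
    have hx : C x (σ r) = 0 := hC _ _ (by rw [hσC, LinearMap.zero_apply])
    simpa [hx, hπσ', hε] using h (σ r, 0)
  have hx : x ∈ LinearMap.ker C := LinearMap.ext fun y ↦ by simpa [hφ] using h (y, 0)
  obtain ⟨r, rfl⟩ := hσ.ge hx
  rw [hπσ'] at hπx
  rw [hπx, map_zero, hφ, Prod.mk_zero_zero]

lemma exists_linearMap_apply_eq {N : Type*} [AddCommGroup N] [Module K N] [FiniteDimensional K V]
    {B : BilinForm K V} (hB : B.Nondegenerate) {i : M →ₗ[K] V} (hi : Function.Injective i)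
    (f : N →ₗ[K] Dual K M) : ∃ s : N →ₗ[K] V, ∀ x y, B (i x) (s y) = f y x := by
  have hsurj : Function.Surjective (i.dualMap ∘ₗ (B.flip.toDual hB.flip).toLinearMap) :=
    (LinearMap.dualMap_surjective_of_injective hi).comp (B.flip.toDual hB.flip).surjective
  obtain ⟨s, hs⟩ := projective_lifting_property _ f hsurj
  exact ⟨s, fun x y ↦ LinearMap.congr_fun (LinearMap.congr_fun hs y) x⟩

/-- The complement of `i` is first chosen with the right pairing against `i`, then made isotropic by
subtracting half of its Gram matrix, realized in the radical of `C`. -/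
lemma exists_isometry_hyperbolicExtension [NeZero (2 : K)] [FiniteDimensional K V]
    [FiniteDimensional K R] {B : BilinForm K V} (hBε : IsEpsSymm ε B)
    (hB : B.Nondegenerate) (hπσ : π ∘ₗ σ = LinearMap.id) (hσ : C ∘ₗ σ = 0)
    (i : C →bᵢ B) (hi : Function.Injective i) :
    ∃ j : hyperbolicExtension ε C π →bᵢ B, ∀ x, j (x, 0) = i x := by
  obtain ⟨s, hs⟩ := exists_linearMap_apply_eq hB (i := i.toLinearMap) hi
    (π.dualMap : Dual K R →ₗ[K] Dual K M)
  replace hs (x : M) (φ : Dual K R) : B (i x) (s φ) = φ (π x) := hs x φ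
  have hs' (x : M) (φ : Dual K R) : B (s φ) (i x) = ε * φ (π x) := by rw [hBε, hs]
  let c : Dual K R →ₗ[K] R :=
    (evalEquiv K R).symm.toLinearMap ∘ₗ ((2⁻¹ : K) • B.compl₁₂ s s)
  have hc (φ ψ : Dual K R) : ψ (c φ) = 2⁻¹ * B (s φ) (s ψ) := by simp [c]
  have hσ' (r : R) (x : M) : C (σ r) x = 0 := by
    rw [← LinearMap.comp_apply, hσ, LinearMap.zero_apply, LinearMap.zero_apply]
  have hCσ (x : M) (r : R) : C x (σ r) = 0 := by
    rw [← i.map_app, hBε, i.map_app, hσ', mul_zero]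
  have hπσ' (r : R) : π (σ r) = r := LinearMap.congr_fun hπσ r
  refine ⟨⟨i.toLinearMap.coprod (s - i.toLinearMap ∘ₗ σ ∘ₗ c), fun ⟨x, φ⟩ ⟨y, ψ⟩ ↦ ?_⟩,
    fun x ↦ ?_⟩
  · have hhalf : (2 : K)⁻¹ + 2⁻¹ = 1 := by rw [← two_mul, mul_inv_cancel₀ two_ne_zero]
    simp only [LinearMap.coprod_apply, LinearMap.sub_apply, LinearMap.comp_apply, map_add, map_sub,
      LinearMap.add_apply, i.map_app, hs, hs', hσ', hCσ, hπσ', hc,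
      LinearMap.BilinForm.Isometry.coe_toLinearMap, hyperbolicExtension_apply,
      AddHom.toFun_eq_coe, LinearMap.coe_toAddHom]
    linear_combination (- B (s φ) (s ψ)) * hhalf + 2⁻¹ * hBε (s φ) (s ψ)
  · simp [← LinearMap.BilinForm.Isometry.coe_toLinearMap]

lemma isometry_injective_of_nondegenerate {B : BilinForm K V} (hC : C.Nondegenerate) (f : C →bᵢ B) :
    Function.Injective f :=
  (injective_iff_map_eq_zero f).mpr fun x hx ↦ hC.1 x fun y ↦ by
    rw [← f.map_app, hx, map_zero, LinearMap.zero_apply]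

variable [FiniteDimensional K V]

lemma exists_isometryEquiv_of_finrank_eq [FiniteDimensional K M] {B : BilinForm K V}
    (hC : C.Nondegenerate) (hdim : finrank K M = finrank K V) (f : C →bᵢ B) :
    ∃ g : C.IsometryEquiv B, ∀ x, g x = f x :=
  ⟨{ f.toLinearMap.linearEquivOfInjective (isometry_injective_of_nondegenerate hC f) hdim with
      map_app' := f.map_app }, fun _ ↦ rfl⟩

lemma exists_orthogonal_eq_self {B : BilinForm K V} (hB : B.IsAlt) :
    ∃ L : Submodule K V, B.orthogonal L = L := by
  obtain ⟨L, hL⟩ := exists_maximal_of_wellFoundedGT (fun L : Submodule K V ↦ L ≤ B.orthogonal L)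
    ⟨⊥, bot_le⟩
  refine ⟨L, le_antisymm (fun v hv ↦ ?_) hL.prop⟩
  have hLv : L ⊔ K ∙ v ≤ B.orthogonal (L ⊔ K ∙ v) := by
    intro x hx y hy
    obtain ⟨x, hxL, _, hav, rfl⟩ := Submodule.mem_sup.mp hx
    obtain ⟨y, hyL, _, hbv, rfl⟩ := Submodule.mem_sup.mp hy
    obtain ⟨a, rfl⟩ := Submodule.mem_span_singleton.mp hav
    obtain ⟨b, rfl⟩ := Submodule.mem_span_singleton.mp hbv
    have hyx : B y x = 0 := hL.prop hxL y hyL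
    have hyv : B y v = 0 := hv y hyL
    have hvx : B v x = 0 := hB.isRefl _ _ (hv x hxL)
    simp [hyx, hyv, hvx, hB v]
  exact hL.le_of_ge hLv le_sup_left (Submodule.mem_sup_right (Submodule.mem_span_singleton_self v))

lemma exists_basis_toMatrix_eq_J [NeZero (2 : K)] {B : BilinForm K V} (hB : B.Nondegenerate)
    (hBalt : B.IsAlt) :
    ∃ m, ∃ b : Basis (Fin m ⊕ Fin m) K V,
      LinearMap.BilinForm.toMatrix b B = Matrix.J (Fin m) K := by
  obtain ⟨L, hL⟩ := exists_orthogonal_eq_self hBalt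
  let i : (0 : BilinForm K L) →bᵢ B := ⟨L.subtype, fun x y ↦ hL.ge y.2 x x.2⟩
  obtain ⟨j, -⟩ := exists_isometry_hyperbolicExtension (σ := .id) (π := .id)
    (isEpsSymm_neg_one_iff.mpr hBalt) hB rfl rfl i L.subtype_injective
  have hdim : finrank K (L × Dual K L) = finrank K V := by
    have h := LinearMap.BilinForm.finrank_orthogonal hB L
    rw [hL] at h
    rw [finrank_prod, Subspace.dual_finrank_eq]
    have := L.finrank_le
    omega
  obtain ⟨e, -⟩ := exists_isometryEquiv_of_finrank_eq
    (hyperbolicExtension_nondegenerate (σ := .id) (by simp) (fun _ _ _ ↦ rfl) rfl (by simp)) hdim j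
  let b := finBasis K L
  refine ⟨_, ((b.prod b.dualBasis).reindex (Equiv.sumComm _ _)).map e.toLinearEquiv, ?_⟩
  ext (s | s) (t | t) <;>
    simp [Matrix.J, Matrix.one_apply, Finsupp.single_apply, eq_comm, apply_ite (- · : K → K)]

end HyperbolicExtension

section Classification

variable {K V V' : Type*} [Field K] [NeZero (2 : K)] [AddCommGroup V] [Module K V]
  [FiniteDimensional K V] [AddCommGroup V'] [Module K V'] [FiniteDimensional K V']
  {B : BilinForm K V} {B' : BilinForm K V'} {ε : K}

lemma equivalent_of_isAlt (hB : B.Nondegenerate) (hB' : B'.Nondegenerate) (hBalt : B.IsAlt)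
    (hBalt' : B'.IsAlt) (hdim : finrank K V = finrank K V') : B.Equivalent B' := by
  obtain ⟨m, b, hb⟩ := exists_basis_toMatrix_eq_J hB hBalt
  obtain ⟨m', b', hb'⟩ := exists_basis_toMatrix_eq_J hB' hBalt'
  obtain rfl : m = m' := by
    have hm := finrank_eq_card_basis b
    have hm' := finrank_eq_card_basis b'
    simp only [Fintype.card_sum, Fintype.card_fin] at hm hm'
    omega
  let e : V ≃ₗ[K] V' := b.equiv b' (.refl _)
  have he : B'.compl₁₂ e.toLinearMap e.toLinearMap = B := by
    refine b.ext fun s ↦ b.ext fun t ↦ ?_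
    have hst := congr_fun₂ (hb'.trans hb.symm) s t
    simpa [e] using hst
  exact ⟨{ e with map_app' := LinearMap.congr_fun₂ he }⟩

lemma equivalent_of_isSymm [IsAlgClosed K] (hB : B.Nondegenerate) (hB' : B'.Nondegenerate)
    (hBsymm : B.IsSymm) (hBsymm' : B'.IsSymm) (hdim : finrank K V = finrank K V') :
    B.Equivalent B' := by
  have := invertibleOfNonzero (two_ne_zero (α := K))
  have hassoc := QuadraticMap.associated_left_inverse K hBsymm.eq
  have hassoc' := QuadraticMap.associated_left_inverse K hBsymm'.eq
  have h := QuadraticForm.equivalent_weightedSumSquares_of_isAlgClosed B.toQuadraticMap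
    (by rw [hassoc]; exact hB.1)
  have h' := QuadraticForm.equivalent_weightedSumSquares_of_isAlgClosed B'.toQuadraticMap
    (by rw [hassoc']; exact hB'.1)
  rw [hdim] at h
  obtain ⟨e⟩ := h.trans h'.symm
  have hcomp : B'.toQuadraticMap.comp e.toLinearEquiv.toLinearMap = B.toQuadraticMap :=
    QuadraticMap.ext e.map_app
  have he := congrArg (QuadraticMap.associatedHom K) hcomp
  rw [QuadraticMap.associated_comp, hassoc, hassoc'] at he
  exact ⟨{ e.toLinearEquiv with map_app' := LinearMap.congr_fun₂ he }⟩

theorem equivalent_of_finrank_eq (hε : ε = -1 ∨ ε = 1 ∧ IsAlgClosed K) (hB : B.Nondegenerate)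
    (hB' : B'.Nondegenerate) (hBε : IsEpsSymm ε B) (hBε' : IsEpsSymm ε B')
    (hdim : finrank K V = finrank K V') : B.Equivalent B' := by
  obtain rfl | ⟨rfl, _⟩ := hε
  · exact equivalent_of_isAlt hB hB' (isEpsSymm_neg_one_iff.mp hBε)
      (isEpsSymm_neg_one_iff.mp hBε') hdim
  · exact equivalent_of_isSymm hB hB' (isEpsSymm_one_iff.mp hBε)
      (isEpsSymm_one_iff.mp hBε') hdim

end Classification

section Gluing

variable {K V V' M : Type*} [Field K] [AddCommGroup V] [Module K V] [AddCommGroup V'] [Module K V']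
  [AddCommGroup M] [Module K M] {B : BilinForm K V} {B' : BilinForm K V'} {C : BilinForm K M}

lemma exists_isometryEquiv_of_isCompl (hB : B.IsRefl) (hB' : B'.IsRefl)
    {W U : Submodule K V} {W' U' : Submodule K V'} (hWU : IsCompl W U) (hWU' : IsCompl W' U')
    (hU : U ≤ B.orthogonal W) (hU' : U' ≤ B'.orthogonal W')
    (e : (B.restrict W).IsometryEquiv (B'.restrict W'))
    (f : (B.restrict U).IsometryEquiv (B'.restrict U')) :
    ∃ g : B.IsometryEquiv B', ∀ w : W, g w = e w := by
  let P := W.prodEquivOfIsCompl U hWU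
  let P' := W'.prodEquivOfIsCompl U' hWU'
  let g := P.symm ≪≫ₗ (e.toLinearEquiv.prodCongr f.toLinearEquiv) ≪≫ₗ P'
  have hg (w : W) (u : U) : g (w + u) = e w + f u := by
    have hP : P.symm (w + u) = (w, u) := P.symm_apply_eq.mpr rfl
    simp [g, hP, P']
  have hWU₀ (w : W) (u : U) : B w u = 0 := hU u.2 w w.2
  have hWU₀' (w : W') (u : U') : B' w u = 0 := hU' u.2 w w.2
  refine ⟨{ g with map_app' := fun x y ↦ ?_ }, fun w ↦ (by simpa using hg w 0 : g w = e w)⟩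
  obtain ⟨⟨w₁, u₁⟩, rfl⟩ := P.surjective x
  obtain ⟨⟨w₂, u₂⟩, rfl⟩ := P.surjective y
  have he : B' (e w₁) (e w₂) = B w₁ w₂ := e.map_app w₂ w₁
  have hf : B' (f u₁) (f u₂) = B u₁ u₂ := f.map_app u₂ u₁
  change B' (g (w₁ + u₁)) (g (w₂ + u₂)) = B (w₁ + u₁) (w₂ + u₂)
  simp only [hg, map_add, LinearMap.add_apply, he, hf, hWU₀, hWU₀', hB _ _ (hWU₀ _ _),
    hB' _ _ (hWU₀' _ _)]

lemma restrict_orthogonal_nondegenerate [FiniteDimensional K V] (hB : B.Nondegenerate)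
    (hrefl : B.IsRefl) {W : Submodule K V} (hW : (B.restrict W).Nondegenerate) :
    (B.restrict (B.orthogonal W)).Nondegenerate := by
  have hcompl := LinearMap.BilinForm.isCompl_orthogonal_of_restrict_nondegenerate hrefl hW
  refine B.nondegenerate_restrict_of_disjoint_orthogonal hrefl ?_
  rw [LinearMap.BilinForm.orthogonal_orthogonal hB hrefl]
  exact hcompl.symm.disjoint

lemma ker_le_orthogonal (hB : B.IsRefl) (W : Submodule K V) : LinearMap.ker B ≤ B.orthogonal W :=
  (LinearMap.BilinForm.orthogonal_top_eq_ker hB).ge.trans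
    (LinearMap.BilinForm.orthogonal_le le_top)

lemma restrict_ker (B : BilinForm K V) : B.restrict (LinearMap.ker B) = 0 :=
  LinearMap.ext₂ fun x y ↦ LinearMap.congr_fun x.2 y

lemma restrict_nondegenerate_of_isCompl_ker [FiniteDimensional K V] {W : Submodule K V}
    (hB : B.IsRefl) (hW : IsCompl W (LinearMap.ker B)) : (B.restrict W).Nondegenerate := by
  rw [LinearMap.BilinForm.nondegenerate_iff_ker_eq_bot,
    LinearMap.BilinForm.ker_restrict_eq_of_codisjoint hW.codisjoint
      fun x hx y hy ↦ ker_le_orthogonal hB W hy x hx]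
  exact Submodule.disjoint_iff_comap_eq_bot.mp hW.disjoint

lemma finrank_ker_restrict (hB : B.IsRefl) (W : Submodule K V) :
    finrank K (LinearMap.ker (B.restrict W)) = finrank K ↥(W ⊓ B.orthogonal W) := by
  have hmap : (LinearMap.ker (B.restrict W)).map W.subtype = W ⊓ B.orthogonal W := by
    refine le_antisymm ?_ (LinearMap.BilinForm.inf_orthogonal_self_le_ker_restrict hB)
    rintro _ ⟨x, hx, rfl⟩
    exact ⟨x.2, fun y hy ↦ hB _ _ (LinearMap.congr_fun hx ⟨y, hy⟩)⟩
  rw [← hmap, Submodule.finrank_map_subtype_eq]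

/-- An injective isometry, viewed as an isometric equivalence onto its range. -/
noncomputable def isometryEquivRange (i : C →bᵢ B) (hi : Function.Injective i) :
    C.IsometryEquiv (B.restrict (LinearMap.range i.toLinearMap)) :=
  { LinearEquiv.ofInjective i.toLinearMap hi with map_app' := i.map_app }

lemma nondegenerate_of_isometryEquiv (e : C.IsometryEquiv B) (hC : C.Nondegenerate) :
    B.Nondegenerate := by
  have hcongr : LinearMap.BilinForm.congr e.toLinearEquiv C = B :=
    LinearMap.ext₂ e.symm.map_app'
  exact hcongr ▸ hC.congr e.toLinearEquiv

end Gluing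

section Witt

variable {K V V' M : Type*} [Field K] [NeZero (2 : K)] [AddCommGroup V] [Module K V]
  [FiniteDimensional K V] [AddCommGroup V'] [Module K V'] [FiniteDimensional K V']
  [AddCommGroup M] [Module K M]
  {B : BilinForm K V} {B' : BilinForm K V'} {C : BilinForm K M} {ε : K}

theorem witt_extension_of_nondegenerate (hε : ε = -1 ∨ ε = 1 ∧ IsAlgClosed K)
    (hBε : IsEpsSymm ε B) (hBε' : IsEpsSymm ε B') (hB : B.Nondegenerate) (hB' : B'.Nondegenerate)
    (hdim : finrank K V = finrank K V') (hC : C.Nondegenerate) (i : C →bᵢ B) (i' : C →bᵢ B') :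
    ∃ g : B.IsometryEquiv B', ∀ x, g (i x) = i' x := by
  let e := isometryEquivRange i (isometry_injective_of_nondegenerate hC i)
  let e' := isometryEquivRange i' (isometry_injective_of_nondegenerate hC i')
  have hW := nondegenerate_of_isometryEquiv e hC
  have hW' := nondegenerate_of_isometryEquiv e' hC
  obtain ⟨f⟩ := equivalent_of_finrank_eq hε (restrict_orthogonal_nondegenerate hB hBε.isRefl hW)
    (restrict_orthogonal_nondegenerate hB' hBε'.isRefl hW') (hBε.restrict _) (hBε'.restrict _)
    (by rw [LinearMap.BilinForm.finrank_orthogonal hB, LinearMap.BilinForm.finrank_orthogonal hB',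
      hdim, ← e.toLinearEquiv.finrank_eq, ← e'.toLinearEquiv.finrank_eq])
  obtain ⟨g, hg⟩ := exists_isometryEquiv_of_isCompl hBε.isRefl hBε'.isRefl
    (LinearMap.BilinForm.isCompl_orthogonal_of_restrict_nondegenerate hBε.isRefl hW)
    (LinearMap.BilinForm.isCompl_orthogonal_of_restrict_nondegenerate hBε'.isRefl hW')
    le_rfl le_rfl (e.symm.trans e') f
  refine ⟨g, fun x ↦ ?_⟩
  calc g (i x) = e' (e.toLinearEquiv.symm (e.toLinearEquiv x)) := hg (e x)
    _ = i' x := by rw [LinearEquiv.symm_apply_apply]; rfl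

theorem witt_extension (hε : ε = -1 ∨ ε = 1 ∧ IsAlgClosed K)
    (hBε : IsEpsSymm ε B) (hBε' : IsEpsSymm ε B') (hB : B.Nondegenerate) (hB' : B'.Nondegenerate)
    (hdim : finrank K V = finrank K V') (i : C →bᵢ B) (hi : Function.Injective i)
    (i' : C →bᵢ B') (hi' : Function.Injective i') :
    ∃ g : B.IsometryEquiv B', ∀ x, g (i x) = i' x := by
  have := FiniteDimensional.of_injective i.toLinearMap hi
  have hε₀ : ε ≠ 0 := by rcases hε with rfl | ⟨rfl, -⟩ <;> simp
  have hCrefl : C.IsRefl := fun x y hxy ↦ by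
    rw [← i.map_app] at hxy ⊢
    exact hBε.isRefl _ _ hxy
  let σ := (LinearMap.ker C).subtype
  obtain ⟨π, hπσ⟩ := σ.exists_leftInverse_of_injective (Submodule.ker_subtype _)
  have hσ : C ∘ₗ σ = 0 := LinearMap.ext fun r ↦ r.2
  obtain ⟨j, hj⟩ := exists_isometry_hyperbolicExtension hBε hB hπσ hσ i hi
  obtain ⟨j', hj'⟩ := exists_isometry_hyperbolicExtension hBε' hB' hπσ hσ i' hi'
  obtain ⟨g, hg⟩ := witt_extension_of_nondegenerate hε hBε hBε' hB hB' hdim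
    (hyperbolicExtension_nondegenerate hε₀ hCrefl hπσ (Submodule.range_subtype _)) j j'
  exact ⟨g, fun x ↦ by rw [← hj, hg, hj']⟩

theorem equivalent_of_finrank_ker_eq (hε : ε = -1 ∨ ε = 1 ∧ IsAlgClosed K) (hBε : IsEpsSymm ε B)
    (hBε' : IsEpsSymm ε B') (hdim : finrank K V = finrank K V')
    (hker : finrank K (LinearMap.ker B) = finrank K (LinearMap.ker B')) : B.Equivalent B' := by
  obtain ⟨W, hW⟩ := (LinearMap.ker B).exists_isCompl
  obtain ⟨W', hW'⟩ := (LinearMap.ker B').exists_isCompl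
  have hdimW : finrank K W = finrank K W' := by
    have h := Submodule.finrank_add_eq_of_isCompl hW
    have h' := Submodule.finrank_add_eq_of_isCompl hW'
    omega
  obtain ⟨e⟩ := equivalent_of_finrank_eq hε
    (restrict_nondegenerate_of_isCompl_ker hBε.isRefl hW.symm)
    (restrict_nondegenerate_of_isCompl_ker hBε'.isRefl hW'.symm)
    (hBε.restrict W) (hBε'.restrict W') hdimW
  let f : (B.restrict (LinearMap.ker B)).IsometryEquiv (B'.restrict (LinearMap.ker B')) :=
    { LinearEquiv.ofFinrankEq _ _ hker with
      map_app' := fun x y ↦ by rw [restrict_ker, restrict_ker]; rfl }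
  obtain ⟨g, -⟩ := exists_isometryEquiv_of_isCompl hBε.isRefl hBε'.isRefl hW.symm hW'.symm
    (ker_le_orthogonal hBε.isRefl W) (ker_le_orthogonal hBε'.isRefl W') e f
  exact ⟨g⟩

theorem exists_isometryEquiv_map_eq (hε : ε = -1 ∨ ε = 1 ∧ IsAlgClosed K)
    (hBε : IsEpsSymm ε B) (hBε' : IsEpsSymm ε B') (hB : B.Nondegenerate) (hB' : B'.Nondegenerate)
    (hdim : finrank K V = finrank K V') {H : Submodule K V} {H' : Submodule K V'}
    (hH : finrank K H = finrank K H')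
    (hrad : finrank K ↥(H ⊓ B.orthogonal H) = finrank K ↥(H' ⊓ B'.orthogonal H')) :
    ∃ g : B.IsometryEquiv B', H.map g.toLinearEquiv.toLinearMap = H' := by
  obtain ⟨e⟩ := equivalent_of_finrank_ker_eq hε (hBε.restrict H) (hBε'.restrict H') hH
    (by rw [finrank_ker_restrict hBε.isRefl, finrank_ker_restrict hBε'.isRefl, hrad])
  let i : B.restrict H →bᵢ B := ⟨H.subtype, fun _ _ ↦ rfl⟩
  let i' : B'.restrict H' →bᵢ B' := ⟨H'.subtype, fun _ _ ↦ rfl⟩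
  obtain ⟨g, hg⟩ := witt_extension hε hBε hBε' hB hB' hdim i H.subtype_injective
    (i'.comp e.toIsometry) (H'.subtype_injective.comp e.toLinearEquiv.injective)
  have hcomp : g.toLinearEquiv.toLinearMap ∘ₗ H.subtype =
      H'.subtype ∘ₗ e.toLinearEquiv.toLinearMap := LinearMap.ext hg
  refine ⟨g, ?_⟩
  rw [← H.range_subtype, ← LinearMap.range_comp, hcomp, LinearMap.range_comp, LinearEquiv.range,
    Submodule.map_top, H'.range_subtype]

end Witt

section Determinant

variable {K V : Type*} [Field K] [AddCommGroup V] [Module K V] {B : BilinForm K V}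

lemma transpose_toMatrix_mul_toMatrix_mul_toMatrix {ι : Type*} [Fintype ι] [DecidableEq ι]
    (b : Basis ι K V) (g : B →bᵢ B) :
    (LinearMap.toMatrix b b g.toLinearMap).transpose * LinearMap.BilinForm.toMatrix b B *
      LinearMap.toMatrix b b g.toLinearMap = LinearMap.BilinForm.toMatrix b B := by
  have hg : B.comp g.toLinearMap g.toLinearMap = B := LinearMap.ext₂ g.map_app
  rw [← LinearMap.BilinForm.toMatrix_comp, hg]

lemma exists_apply_self_ne_zero [NeZero (2 : K)] (hB : B.IsSymm) {W : Submodule K V}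
    (hW : ¬ W ≤ B.orthogonal W) : ∃ u ∈ W, B u u ≠ 0 := by
  have := invertibleOfNonzero (two_ne_zero (α := K))
  have hne : B.restrict W ≠ 0 := fun h ↦
    hW fun x hx y hy ↦ LinearMap.congr_fun₂ h ⟨y, hy⟩ ⟨x, hx⟩
  obtain ⟨u, hu⟩ := LinearMap.BilinForm.exists_bilinForm_self_ne_zero hne
    ⟨(hB.restrict W).eq⟩
  exact ⟨u, u.2, hu⟩

variable [FiniteDimensional K V]

theorem det_isometry_eq_one_of_isAlt [NeZero (2 : K)] (hB : B.Nondegenerate) (hBalt : B.IsAlt)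
    (g : B →bᵢ B) : LinearMap.det g.toLinearMap = 1 := by
  obtain ⟨m, b, hb⟩ := exists_basis_toMatrix_eq_J hB hBalt
  rw [← LinearMap.det_toMatrix b]
  refine SymplecticGroup.det_eq_one (SymplecticGroup.mem_iff'.mpr ?_)
  rw [← hb, transpose_toMatrix_mul_toMatrix_mul_toMatrix]

theorem det_isometry_mul_self (hB : B.Nondegenerate) (g : B →bᵢ B) :
    LinearMap.det g.toLinearMap * LinearMap.det g.toLinearMap = 1 := by
  classical
  let b := finBasis K V
  have hdet := congrArg Matrix.det (transpose_toMatrix_mul_toMatrix_mul_toMatrix b g)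
  rw [Matrix.det_mul, Matrix.det_mul, Matrix.det_transpose, LinearMap.det_toMatrix] at hdet
  refine mul_right_cancel₀ ((LinearMap.BilinForm.nondegenerate_iff_det_ne_zero b).mp hB) ?_
  linear_combination hdet

lemma exists_isometryEquiv_reflection (hB : B.IsSymm) {u : V} (hu : B u u ≠ 0) :
    ∃ s : B.IsometryEquiv B, LinearMap.det s.toLinearEquiv.toLinearMap = -1 ∧
      ∀ v, s v = v - (2 * B u v / B u u) • u := by
  have hrefl : LinearMap.IsReflective B u :=
    ⟨.of_ne_zero hu, fun v ↦ (isUnit_iff_ne_zero.mpr hu).dvd⟩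
  let c := LinearMap.IsReflective.coroot B hrefl
  let s := Module.reflection (LinearMap.IsReflective.coroot_apply_self B hrefl)
  have hc (v : V) : c v = 2 * B u v / B u u := by
    rw [eq_div_iff hu, mul_comm]
    exact LinearMap.IsReflective.apply_self_mul_coroot_apply B hrefl
  have hs (v : V) : s v = v - c v • u := Module.reflection_apply ..
  have hs_transvection : s.toLinearMap = LinearMap.transvection (-c) u := by
    ext v
    simp [LinearMap.transvection.apply, hs, sub_eq_add_neg]
  refine ⟨{ s with map_app' := LinearMap.IsReflective.isOrthogonal_reflection B hrefl ⟨hB.eq⟩ }, ?_,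
    fun v ↦ (hs v).trans (by rw [hc])⟩
  change LinearMap.det s.toLinearMap = -1
  rw [hs_transvection, LinearMap.transvection.det, LinearMap.neg_apply,
    LinearMap.IsReflective.coroot_apply_self]
  norm_num

theorem exists_isometryEquiv_det_eq_neg_one_map_eq_self [NeZero (2 : K)] (hB : B.Nondegenerate)
    (hBsymm : B.IsSymm) {H : Submodule K V} (hH : B.orthogonal H ≠ H) :
    ∃ s : B.IsometryEquiv B, LinearMap.det s.toLinearEquiv.toLinearMap = -1 ∧
      H.map s.toLinearEquiv.toLinearMap = H := by
  obtain ⟨u, hu, huu⟩ : ∃ u, (u ∈ H ∨ u ∈ B.orthogonal H) ∧ B u u ≠ 0 := by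
    by_cases hiso : H ≤ B.orthogonal H
    · have hcoiso : ¬ B.orthogonal H ≤ B.orthogonal (B.orthogonal H) := by
        rw [LinearMap.BilinForm.orthogonal_orthogonal hB hBsymm.isRefl]
        exact fun h ↦ hH (le_antisymm h hiso)
      obtain ⟨u, hu, huu⟩ := exists_apply_self_ne_zero hBsymm hcoiso
      exact ⟨u, .inr hu, huu⟩
    · obtain ⟨u, hu, huu⟩ := exists_apply_self_ne_zero hBsymm hiso
      exact ⟨u, .inl hu, huu⟩
  obtain ⟨s, hdet, hs⟩ := exists_isometryEquiv_reflection hBsymm huu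
  have hle : H.map s.toLinearEquiv.toLinearMap ≤ H := by
    rintro _ ⟨v, hv, rfl⟩
    change s v ∈ H
    rw [hs]
    rcases hu with hu | hu
    · exact H.sub_mem hv (H.smul_mem _ hu)
    · have huv : B u v = 0 := hBsymm.isRefl _ _ (hu v hv)
      simpa [huv] using hv
  exact ⟨s, hdet, Submodule.eq_of_le_of_finrank_eq hle (s.toLinearEquiv.finrank_map_eq H)⟩

end Determinant

lemma bperp_eq_orthogonal {V : Type*} [AddCommGroup V] [Module ℂ V] {B : BilinForm ℂ V}
    (hB : B.IsRefl) (H : Submodule ℂ V) : bperp B H = B.orthogonal H :=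
  Submodule.ext fun _ ↦ forall₂_congr fun _ _ ↦ hB.eq_iff

lemma orthogonal_ne_self_of_pos {K V : Type*} [Field K] [AddCommGroup V] [Module K V]
    [FiniteDimensional K V] {B : BilinForm K V} (hB : B.Nondegenerate) {H : Submodule K V}
    {r : ℤ} (hrad : (finrank K ↥(H ⊓ B.orthogonal H) : ℤ) = finrank K H - r)
    (hr : 0 < r ∨ 0 < (finrank K V : ℤ) - 2 * finrank K H + r) : B.orthogonal H ≠ H := by
  intro hH
  have hdim := LinearMap.BilinForm.finrank_orthogonal hB H
  rw [hH] at hdim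
  rw [hH, inf_idem] at hrad
  have := H.finrank_le
  omega

theorem stmt_2_general {K V : Type*} [Field K] [NeZero (2 : K)] [AddCommGroup V] [Module K V]
    [FiniteDimensional K V] {B : BilinForm K V} (hB : B.Nondegenerate) {H H' : Submodule K V}
    (hH : finrank K H = finrank K H')
    (hrad : finrank K ↥(H ⊓ B.orthogonal H) = finrank K ↥(H' ⊓ B.orthogonal H'))
    (hcase : B.IsAlt ∨ IsAlgClosed K ∧ B.IsSymm ∧ B.orthogonal H ≠ H) :
    ∃ g : B.IsometryEquiv B, LinearMap.det g.toLinearEquiv.toLinearMap = 1 ∧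
      H.map g.toLinearEquiv.toLinearMap = H' := by
  obtain hBalt | ⟨hK, hBsymm, hne⟩ := hcase
  · have hBε := isEpsSymm_neg_one_iff.mpr hBalt
    obtain ⟨g, hg⟩ := exists_isometryEquiv_map_eq (.inl rfl) hBε hBε hB hB rfl hH hrad
    exact ⟨g, det_isometry_eq_one_of_isAlt hB hBalt g.toIsometry, hg⟩
  · have hBε := isEpsSymm_one_iff.mpr hBsymm
    obtain ⟨g, hg⟩ := exists_isometryEquiv_map_eq (.inr ⟨rfl, hK⟩) hBε hBε hB hB rfl hH hrad
    have hdet_sq : LinearMap.det g.toLinearEquiv.toLinearMap *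
        LinearMap.det g.toLinearEquiv.toLinearMap = 1 := det_isometry_mul_self hB g.toIsometry
    obtain hdet | hdet := mul_self_eq_one_iff.mp hdet_sq
    · exact ⟨g, hdet, hg⟩
    · obtain ⟨s, hsdet, hs⟩ := exists_isometryEquiv_det_eq_neg_one_map_eq_self hB hBsymm hne
      have hcomp : (s.trans g).toLinearEquiv.toLinearMap =
        g.toLinearEquiv.toLinearMap ∘ₗ s.toLinearEquiv.toLinearMap := rfl
      refine ⟨s.trans g, ?_, by rw [hcomp, Submodule.map_comp, hs, hg]⟩
      rw [hcomp, LinearMap.det_comp, hdet, hsdet, neg_one_mul, neg_neg]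

/-- Lemma 3.2 (`lem:v4-orbit`), second part: under the additional assumption that the form
is skew-symmetric, or symmetric with `r > 0` or `n - 2k + r > 0`, the isometry carrying `H`
to `H'` can be chosen to have determinant `1`. -/
theorem stmt_2 {V : Type*} [AddCommGroup V] [Module ℂ V] [FiniteDimensional ℂ V]
    (n : ℕ) (hn : finrank ℂ V = n)
    (B : V →ₗ[ℂ] V →ₗ[ℂ] ℂ)
    (hB : ∀ v, (∀ w, B v w = 0) → v = 0)
    (H H' : Submodule ℂ V) (k r : ℕ)
    (hk : finrank ℂ H = k) (hk' : finrank ℂ H' = k)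
    (hrad : (finrank ℂ ↥(H ⊓ bperp B H) : ℤ) = (k : ℤ) - r)
    (hrad' : (finrank ℂ ↥(H' ⊓ bperp B H') : ℤ) = (k : ℤ) - r)
    (hcase : (∀ v w, B v w = - B w v) ∨
      ((∀ v w, B v w = B w v) ∧ (0 < r ∨ 0 < (n : ℤ) - 2 * k + r))) :
    ∃ g : V ≃ₗ[ℂ] V, (∀ v w, B (g v) (g w) = B v w) ∧
      LinearMap.det (g : V →ₗ[ℂ] V) = 1 ∧
      Submodule.map (g : V →ₗ[ℂ] V) H = H' := by
  have hBnd : LinearMap.BilinForm.Nondegenerate B := .ofSeparatingLeft hB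
  have hrefl : LinearMap.IsRefl B := fun v w hvw ↦ by
    obtain hskew | ⟨hsymm, -⟩ := hcase
    · rw [hskew, hvw, neg_zero]
    · rw [hsymm, hvw]
  subst hn hk
  rw [bperp_eq_orthogonal hrefl] at hrad hrad'
  obtain ⟨g, hdet, hg⟩ := stmt_2_general hBnd hk'.symm (by omega) <| hcase.imp
    (fun hskew ↦ isEpsSymm_neg_one_iff.mp fun v w ↦ by rw [hskew, neg_one_mul])
    fun ⟨hsymm, hpos⟩ ↦ ⟨inferInstance, ⟨hsymm⟩, orthogonal_ne_self_of_pos hBnd hrad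
      (by exact_mod_cast hpos)⟩
  exact ⟨g.toLinearEquiv, fun v w ↦ g.map_app w v, hdet, hg⟩
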